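/- arXiv:2408.15181 — 2 statements merged into one kernel-verified Lean document; each statement's English description precedes it below -/
import Mathlib

section
/- An edge-labeling λ of a graph G is good if and only if every cycle of G admits at least two local minima with respect to λ, or at least two local maxima with respect to λ. -/
/-- A walk is *increasing* with respect to an edge-labeling if the sequence of labels of its
edges, traversed from the first endpoint to the last, is non-decreasing. -/
def IsIncreasing {V : Type*} (G : SimpleGraph V) (lab : Sym2 V → ℝ) {x y : V}
    (p : G.Walk x y) : Prop :=
  (p.edges.map lab).Chain' (· ≤ ·)

/-- An edge-labeling is *good* if for every ordered pair `(x, y)` of vertices there do not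
exist two distinct increasing paths from `x` to `y`. -/
def IsGoodLabeling {V : Type*} (G : SimpleGraph V) (lab : Sym2 V → ℝ) : Prop :=
  ∀ (x y : V) (p q : G.Walk x y), p.IsPath → q.IsPath →
    IsIncreasing G lab p → IsIncreasing G lab q → p = q

/-- The `i`-th entry (cyclically) of a list of real numbers. -/
noncomputable def cyc (l : List ℝ) (i : ℕ) : ℝ := l.getD (i % l.length) 0

/-- The cyclic list `l` of edge labels of a cycle has a *local minimum* starting at
position `i` and consisting of `k` consecutive edges: these `k` edges all carry the same
label, and the two edges of the cycle flanking this subpath carry strictly larger labels. -/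
def IsLocalMinAt (l : List ℝ) (i k : ℕ) : Prop :=
  i < l.length ∧ 1 ≤ k ∧ k < l.length ∧
  (∀ j < k, cyc l (i + j) = cyc l i) ∧
  cyc l i < cyc l (i + l.length - 1) ∧
  cyc l i < cyc l (i + k)

/-- Local maximum: as a local minimum, but the flanking edges carry strictly smaller labels. -/
def IsLocalMaxAt (l : List ℝ) (i k : ℕ) : Prop :=
  i < l.length ∧ 1 ≤ k ∧ k < l.length ∧
  (∀ j < k, cyc l (i + j) = cyc l i) ∧
  cyc l (i + l.length - 1) < cyc l i ∧
  cyc l (i + k) < cyc l i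

/-- The cyclic list of labels admits at least two (distinct) local minima. -/
def TwoLocalMinima (l : List ℝ) : Prop :=
  ∃ i₁ k₁ i₂ k₂, i₁ ≠ i₂ ∧ IsLocalMinAt l i₁ k₁ ∧ IsLocalMinAt l i₂ k₂

/-- The cyclic list of labels admits at least two (distinct) local maxima. -/
def TwoLocalMaxima (l : List ℝ) : Prop :=
  ∃ i₁ k₁ i₂ k₂, i₁ ≠ i₂ ∧ IsLocalMaxAt l i₁ k₁ ∧ IsLocalMaxAt l i₂ k₂

/-!
Both conditions say that no cycle has a cyclic sequence of labels which increases once and then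
decreases once. A cycle with such labels splits at its minimum and its maximum into two distinct
increasing paths with common endpoints; conversely, two distinct increasing paths with common
endpoints contain subpaths which together form such a cycle. On the other hand, a cyclic sequence
has this shape if and only if it has at most one local minimum, and by negating the labels if and
only if it has at most one local maximum.
-/

/-- A list is cyclically unimodal if it can be rotated so that it first increases and then
decreases, both weakly. For the labels around a cycle this is the obstruction to a good labeling.
Either of the two parts may be empty. -/
def IsCyclicallyUnimodal {α : Type*} [Preorder α] (l : List α) : Prop :=
  ∃ a b : List α, l ~r a ++ b ∧ a.SortedLE ∧ b.SortedGE

section Unimodal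

variable {α β : Type*} [Preorder α] [Preorder β] {l l' : List α}

theorem IsCyclicallyUnimodal.of_isRotated (h : IsCyclicallyUnimodal l) (hl : l ~r l') :
    IsCyclicallyUnimodal l' := by
  obtain ⟨a, b, hab, ha, hb⟩ := h
  exact ⟨a, b, hl.symm.trans hab, ha, hb⟩

theorem IsCyclicallyUnimodal.map_antitone {f : α → β} (h : IsCyclicallyUnimodal l)
    (hf : Antitone f) : IsCyclicallyUnimodal (l.map f) := by
  obtain ⟨a, b, hab, ha, hb⟩ := h
  refine ⟨b.map f, a.map f, ?_, List.Pairwise.sortedLE ?_, List.Pairwise.sortedGE ?_⟩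
  · rw [← List.map_append]
    exact (hab.trans List.isRotated_append).map f
  · exact hb.pairwise.map f fun _ _ h ↦ hf h
  · exact ha.pairwise.map f fun _ _ h ↦ hf h

theorem IsCyclicallyUnimodal.exists_ne_nil (h : IsCyclicallyUnimodal l) (hl : 2 ≤ l.length) :
    ∃ a b : List α, a ≠ [] ∧ b ≠ [] ∧ l ~r a ++ b ∧ a.SortedLE ∧ b.SortedGE := by
  obtain ⟨a, b, hab, ha, hb⟩ := h
  have hlen : 2 ≤ a.length + b.length := by
    rwa [← List.length_append, ← hab.perm.length_eq]
  rcases eq_or_ne a [] with rfl | ha_ne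
  · obtain ⟨x, b, rfl⟩ := List.exists_cons_of_length_pos
      (Nat.zero_lt_two.trans_le (by simpa using hlen))
    refine ⟨[x], b, by simp, ?_, hab, by simp [List.sortedLE_iff_pairwise],
      hb.pairwise.of_cons.sortedGE⟩
    rintro rfl
    simp at hlen
  rcases eq_or_ne b [] with rfl | hb_ne
  · refine ⟨a.dropLast, [a.getLast ha_ne], ?_, by simp,
      by simpa only [List.dropLast_append_getLast, List.append_nil] using hab,
      (ha.pairwise.sublist a.dropLast_sublist).sortedLE, by simp [List.sortedGE_iff_pairwise]⟩
    rw [← List.length_pos_iff, List.length_dropLast]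
    exact Nat.sub_pos_of_lt hlen
  · exact ⟨a, b, ha_ne, hb_ne, hab, ha, hb⟩

end Unimodal

section CyclicIndexing

variable (l : List ℝ) (i j : ℕ)

theorem cyc_of_lt {l : List ℝ} {i : ℕ} (h : i < l.length) : cyc l i = l[i] := by
  simp [cyc, Nat.mod_eq_of_lt h, h]

theorem cyc_mod_add : cyc l (i % l.length + j) = cyc l (i + j) := by
  simp [cyc]

theorem cyc_mod : cyc l (i % l.length) = cyc l i :=
  cyc_mod_add l i 0

theorem cyc_add_length : cyc l (i + l.length) = cyc l i := by
  simp [cyc]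

theorem cyc_add_length_sub_one {i : ℕ} (hi : 1 ≤ i) :
    cyc l (i + l.length - 1) = cyc l (i - 1) := by
  rw [Nat.sub_add_comm hi, cyc_add_length]

theorem cyc_rotate (r : ℕ) : cyc (l.rotate r) i = cyc l (i + r) := by
  rcases Nat.eq_zero_or_pos l.length with hl | hl
  · simp [cyc, List.length_eq_zero_iff.1 hl]
  · rw [cyc, List.length_rotate, List.getD_eq_getElem?_getD, List.getElem?_rotate (Nat.mod_lt _ hl),
      Nat.mod_add_mod, ← List.getD_eq_getElem?_getD, cyc]

theorem cyc_map_neg : cyc (l.map Neg.neg) i = -cyc l i := by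
  unfold cyc
  rw [List.length_map, ← neg_zero, List.getD_map, neg_zero]

theorem exists_le_length_forall_cyc_le : ∃ m ≤ l.length, ∀ i, cyc l i ≤ cyc l m := by
  obtain ⟨m, hm, hmax⟩ := (Finset.range (l.length + 1)).exists_max_image (cyc l) ⟨0, by simp⟩
  refine ⟨m, Finset.mem_range_succ_iff.1 hm, fun i ↦ ?_⟩
  rw [← cyc_mod]
  rcases Nat.eq_zero_or_pos l.length with hl | hl
  · simp [cyc, List.length_eq_zero_iff.1 hl]
  · exact hmax _ (Finset.mem_range_succ_iff.2 (Nat.mod_lt i hl).le)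

theorem exists_forall_le_cyc : ∃ m, ∀ i, cyc l m ≤ cyc l i := by
  obtain ⟨m, -, hmax⟩ := exists_le_length_forall_cyc_le (l.map Neg.neg)
  exact ⟨m, fun i ↦ by simpa only [cyc_map_neg, neg_le_neg_iff] using hmax i⟩

theorem cyc_append_mono_left {a : List ℝ} (b : List ℝ) (ha : a.SortedLE) {i j : ℕ}
    (hij : i ≤ j) (hj : j < a.length) : cyc (a ++ b) i ≤ cyc (a ++ b) j := by
  have hj' : j < (a ++ b).length := by rw [List.length_append]; omega
  rw [cyc_of_lt (hij.trans_lt hj'), cyc_of_lt hj', List.getElem_append_left (hij.trans_lt hj),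
    List.getElem_append_left hj]
  exact ha.getElem_le_getElem_of_le hij

theorem cyc_append_anti_right (a : List ℝ) {b : List ℝ} (hb : b.SortedGE) {i j : ℕ}
    (hi : a.length ≤ i) (hij : i ≤ j) (hj : j < (a ++ b).length) :
    cyc (a ++ b) j ≤ cyc (a ++ b) i := by
  rw [cyc_of_lt hj, cyc_of_lt (hij.trans_lt hj), List.getElem_append_right hi,
    List.getElem_append_right (hi.trans hij)]
  exact hb.getElem_ge_getElem_of_le (by omega)

theorem sortedLE_take_of_cyc_le {l : List ℝ} {t : ℕ}
    (h : ∀ i, i + 1 < t → cyc l i ≤ cyc l (i + 1)) : (l.take t).SortedLE := by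
  rw [List.sortedLE_iff_isChain, List.isChain_iff_getElem]
  intro i hi
  rw [List.length_take, lt_min_iff] at hi
  simpa only [List.getElem_take, ← cyc_of_lt hi.2, ← cyc_of_lt (Nat.lt_of_succ_lt hi.2)]
    using h i hi.1

theorem sortedGE_drop_of_cyc_le {l : List ℝ} {t : ℕ}
    (h : ∀ i, t ≤ i → i + 1 < l.length → cyc l (i + 1) ≤ cyc l i) : (l.drop t).SortedGE := by
  rw [List.sortedGE_iff_isChain, List.isChain_iff_getElem]
  intro i hi
  rw [List.length_drop] at hi
  have hi' : t + i + 1 < l.length := by omega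
  simpa only [List.getElem_drop, ← add_assoc, ← cyc_of_lt hi', ← cyc_of_lt (Nat.lt_of_succ_lt hi')]
    using h (t + i) (by omega) hi'

end CyclicIndexing

theorem exists_plateau_of_valley {α : Type*} [LinearOrder α] {f : ℕ → α} {a b c : ℕ}
    (hab : a ≤ b) (hbc : b ≤ c) (ha : f b < f a) (hc : f b < f c) :
    ∃ i k, a < i ∧ 1 ≤ k ∧ i + k ≤ c ∧ (∀ j < k, f (i + j) = f i) ∧
      f i < f (i - 1) ∧ f i < f (i + k) := by
  classical
  have exists_min : ∃ i, i ∈ Finset.Icc a c ∧ ∀ m ∈ Finset.Icc a c, f i ≤ f m :=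
    Finset.exists_min_image _ f ⟨b, Finset.mem_Icc.2 ⟨hab, hbc⟩⟩
  obtain ⟨i, ⟨hi_mem, hi_min⟩, hi_first⟩ := Nat.findX exists_min
  simp only [Finset.mem_Icc, and_imp, not_and, not_forall, not_le] at hi_mem hi_min hi_first
  have hib : f i ≤ f b := hi_min b hab hbc
  have hai : a < i := hi_mem.1.lt_of_ne (by rintro rfl; exact hib.not_gt ha)
  have exists_exit : ∃ k, f i < f (i + k) :=
    ⟨c - i, by rw [Nat.add_sub_of_le hi_mem.2]; exact hib.trans_lt hc⟩
  obtain ⟨k, hk, hk_first⟩ := Nat.findX exists_exit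
  have hkc : i + k ≤ c := by
    by_contra hlt
    exact hk_first (c - i) (by omega) (by rw [Nat.add_sub_of_le hi_mem.2]; exact hib.trans_lt hc)
  refine ⟨i, k, hai, Nat.one_le_iff_ne_zero.2 ?_, hkc, fun j hj ↦ ?_, ?_, hk⟩
  · rintro rfl
    exact hk.false
  · exact (not_lt.1 (hk_first j hj)).antisymm (hi_min _ (by omega) (by omega))
  · obtain ⟨m, ham, hmc, hm⟩ := hi_first (i - 1) (by omega) (by omega) (by omega)
    exact (hi_min m ham hmc).trans_lt hm

section LocalMinima

variable {l l' : List ℝ} {i k : ℕ}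

theorem isLocalMinAt_mod_length_iff :
    IsLocalMinAt l (i % l.length) k ↔
      1 ≤ k ∧ k < l.length ∧ (∀ j < k, cyc l (i + j) = cyc l i) ∧
        cyc l i < cyc l (i + l.length - 1) ∧ cyc l i < cyc l (i + k) := by
  rcases Nat.eq_zero_or_pos l.length with hl | hl
  · simp [IsLocalMinAt, hl]
  · simp only [IsLocalMinAt, Nat.mod_lt _ hl, true_and, cyc_mod, cyc_mod_add,
      Nat.add_sub_assoc hl]

theorem IsLocalMinAt.of_rotate {r : ℕ} (h : IsLocalMinAt (l.rotate r) i k) :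
    IsLocalMinAt l ((i + r) % l.length) k := by
  obtain ⟨hi, hk, hkl, hrun, hprev, hnext⟩ := h
  simp only [cyc_rotate, List.length_rotate] at hi hkl hrun hprev hnext
  refine isLocalMinAt_mod_length_iff.2 ⟨hk, hkl, fun j hj ↦ ?_, ?_, ?_⟩
  · rw [add_right_comm, hrun j hj]
  · rwa [add_right_comm, Nat.sub_add_comm (by omega)]
  · rwa [add_right_comm]

theorem TwoLocalMinima.of_isRotated (h : TwoLocalMinima l) (hl : l ~r l') :
    TwoLocalMinima l' := by
  obtain ⟨r, rfl⟩ := hl.symm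
  obtain ⟨i₁, k₁, i₂, k₂, hne, h₁, h₂⟩ := h
  refine ⟨_, k₁, _, k₂, fun heq ↦ hne ?_, h₁.of_rotate, h₂.of_rotate⟩
  have hmod : i₁ ≡ i₂ [MOD l'.length] := Nat.ModEq.add_right_cancel' r heq
  exact hmod.eq_of_lt_of_lt (by simpa using h₁.1) (by simpa using h₂.1)

theorem exists_isLocalMinAt_of_valley {a b c : ℕ} (hab : a ≤ b) (hbc : b ≤ c)
    (hca : c ≤ a + l.length) (ha : cyc l b < cyc l a) (hc : cyc l b < cyc l c) :
    ∃ i k, a < i ∧ i < c ∧ IsLocalMinAt l (i % l.length) k := by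
  obtain ⟨i, k, hai, hk, hikc, hrun, hprev, hnext⟩ := exists_plateau_of_valley hab hbc ha hc
  refine ⟨i, k, hai, by omega,
    isLocalMinAt_mod_length_iff.2 ⟨hk, by omega, hrun, ?_, hnext⟩⟩
  rwa [cyc_add_length_sub_one l (by omega)]

theorem twoLocalMinima_of_two_valleys {a b c d : ℕ} (hab : a ≤ b) (hbc : b ≤ c) (hcd : c ≤ d)
    (hda : d ≤ a + l.length) (hba : cyc l b < cyc l a) (hbc' : cyc l b < cyc l c)
    (hdc : cyc l d < cyc l c) (hda' : cyc l d < cyc l a) : TwoLocalMinima l := by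
  obtain ⟨i₁, k₁, hai₁, hi₁c, h₁⟩ :=
    exists_isLocalMinAt_of_valley hab hbc (hcd.trans hda) hba hbc'
  obtain ⟨i₂, k₂, hci₂, hi₂a, h₂⟩ :=
    exists_isLocalMinAt_of_valley hcd hda (by omega) hdc (by rwa [cyc_add_length])
  refine ⟨_, k₁, _, k₂, fun heq ↦ ?_, h₁, h₂⟩
  have hdvd : l.length ∣ i₂ - i₁ := (Nat.modEq_iff_dvd' (by omega)).1 heq
  exact absurd (Nat.le_of_dvd (by omega) hdvd) (by omega)

theorem isCyclicallyUnimodal_of_forall_cyc_zero_le (hmin : ∀ i, cyc l 0 ≤ cyc l i)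
    (h : ¬ TwoLocalMinima l) : IsCyclicallyUnimodal l := by
  -- Cut the list at a maximum: a wrong step on either side of it would, together with the maximum
  -- and the minimum at the ends, form two valleys.
  obtain ⟨t, ht, hmax⟩ := exists_le_length_forall_cyc_le l
  have hend : cyc l l.length = cyc l 0 := by simpa using cyc_add_length l 0
  refine ⟨l.take t, l.drop t, by rw [List.take_append_drop],
    sortedLE_take_of_cyc_le fun i hi ↦ ?_, sortedGE_drop_of_cyc_le fun i hi hil ↦ ?_⟩
  · by_contra! hdesc
    have hlow : cyc l l.length < cyc l i := hend ▸ (hmin _).trans_lt hdesc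
    exact h (twoLocalMinima_of_two_valleys (Nat.le_succ i) hi.le ht (by omega) hdesc
      (hdesc.trans_le (hmax i)) (hlow.trans_le (hmax i)) hlow)
  · by_contra! hasc
    have hlow : cyc l l.length < cyc l (i + 1) := hend ▸ (hmin _).trans_lt hasc
    exact h (twoLocalMinima_of_two_valleys hi (Nat.le_succ i) hil.le (by omega)
      (hasc.trans_le (hmax _)) hasc hlow (hlow.trans_le (hmax _)))

theorem isCyclicallyUnimodal_of_not_twoLocalMinima (h : ¬ TwoLocalMinima l) :
    IsCyclicallyUnimodal l := by
  obtain ⟨m, hm⟩ := exists_forall_le_cyc l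
  have hrot : l.rotate m ~r l := List.IsRotated.symm ⟨m, rfl⟩
  refine (isCyclicallyUnimodal_of_forall_cyc_zero_le (fun i ↦ ?_)
    fun h' ↦ h (h'.of_isRotated hrot)).of_isRotated hrot
  simpa only [cyc_rotate, zero_add] using hm (i + m)

theorem IsLocalMinAt.length_le_add_of_append {a b : List ℝ} (h : IsLocalMinAt (a ++ b) i k)
    (ha : a.SortedLE) (hb : b.SortedGE) (hi : 1 ≤ i) : (a ++ b).length ≤ i + k := by
  obtain ⟨-, -, -, -, hprev, hnext⟩ := h
  rw [cyc_add_length_sub_one _ hi] at hprev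
  by_contra! hlt
  rcases lt_or_ge i a.length with hia | hia
  · exact hprev.not_ge (cyc_append_mono_left b ha (by omega) hia)
  · exact hnext.not_ge (cyc_append_anti_right a hb hia (by omega) hlt)

theorem not_isLocalMinAt_of_lt_of_append {a b : List ℝ} (ha : a.SortedLE) (hb : b.SortedGE)
    {i₁ k₁ i₂ k₂ : ℕ} (hlt : i₁ < i₂) (h₁ : IsLocalMinAt (a ++ b) i₁ k₁) :
    ¬ IsLocalMinAt (a ++ b) i₂ k₂ := by
  intro h₂
  have hwrap₂ := h₂.length_le_add_of_append ha hb (by omega)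
  obtain ⟨hi₂, -, -, hrun₂, hprev₂, hnext₂⟩ := h₂
  rcases Nat.eq_zero_or_pos i₁ with rfl | hi₁
  · obtain ⟨-, -, -, -, hprev₁, -⟩ := h₁
    have hlast : cyc (a ++ b) ((a ++ b).length - 1) = cyc (a ++ b) i₂ := by
      simpa only [Nat.add_sub_of_le (Nat.le_sub_one_of_lt hi₂)]
        using hrun₂ ((a ++ b).length - 1 - i₂) (by omega)
    have hzero : cyc (a ++ b) i₂ ≤ cyc (a ++ b) 0 := by
      rw [← cyc_add_length _ 0, zero_add]
      rcases hwrap₂.lt_or_eq with hwrap | hwrap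
      · simpa only [Nat.add_sub_of_le hi₂.le]
          using (hrun₂ ((a ++ b).length - i₂) (by omega)).ge
      · exact hwrap ▸ hnext₂.le
    rw [zero_add, hlast] at hprev₁
    exact hprev₁.not_ge hzero
  · have hwrap₁ := h₁.length_le_add_of_append ha hb hi₁
    obtain ⟨-, -, -, hrun₁, -⟩ := h₁
    have run_eq : ∀ m, i₁ ≤ m → m ≤ i₂ → cyc (a ++ b) m = cyc (a ++ b) i₁ := fun m hm hm' ↦ by
      simpa only [Nat.add_sub_of_le hm] using hrun₁ (m - i₁) (by omega)
    rw [cyc_add_length_sub_one _ (by omega), run_eq i₂ hlt.le le_rfl,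
      run_eq (i₂ - 1) (by omega) (by omega)] at hprev₂
    exact hprev₂.false

theorem IsCyclicallyUnimodal.not_twoLocalMinima (h : IsCyclicallyUnimodal l) :
    ¬ TwoLocalMinima l := by
  obtain ⟨a, b, hab, ha, hb⟩ := h
  intro htwo
  obtain ⟨i₁, k₁, i₂, k₂, hne, h₁, h₂⟩ := htwo.of_isRotated hab
  rcases hne.lt_or_gt with hlt | hlt
  · exact not_isLocalMinAt_of_lt_of_append ha hb hlt h₁ h₂
  · exact not_isLocalMinAt_of_lt_of_append ha hb hlt h₂ h₁

theorem not_isCyclicallyUnimodal_iff_twoLocalMinima :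
    ¬ IsCyclicallyUnimodal l ↔ TwoLocalMinima l :=
  ⟨not_imp_comm.1 isCyclicallyUnimodal_of_not_twoLocalMinima,
    fun h h' ↦ h'.not_twoLocalMinima h⟩

end LocalMinima

section LocalMaxima

variable {l : List ℝ}

theorem twoLocalMinima_map_neg : TwoLocalMinima (l.map Neg.neg) ↔ TwoLocalMaxima l := by
  simp only [TwoLocalMinima, TwoLocalMaxima, IsLocalMinAt, IsLocalMaxAt, List.length_map,
    cyc_map_neg, neg_inj, neg_lt_neg_iff]

theorem isCyclicallyUnimodal_map_neg :
    IsCyclicallyUnimodal (l.map Neg.neg) ↔ IsCyclicallyUnimodal l :=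
  have map_neg : ∀ {l : List ℝ}, IsCyclicallyUnimodal l → IsCyclicallyUnimodal (l.map Neg.neg) :=
    fun h ↦ h.map_antitone fun _ _ ↦ neg_le_neg
  ⟨fun h ↦ by simpa using map_neg h, map_neg⟩

theorem twoLocalMaxima_iff_twoLocalMinima : TwoLocalMaxima l ↔ TwoLocalMinima l := by
  rw [← twoLocalMinima_map_neg, ← not_isCyclicallyUnimodal_iff_twoLocalMinima,
    isCyclicallyUnimodal_map_neg, not_isCyclicallyUnimodal_iff_twoLocalMinima]

end LocalMaxima

section Cycles

open SimpleGraph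

variable {V : Type*} {G : SimpleGraph V}

theorem isCycle_append_comm {u v : V} {p : G.Walk u v} {q : G.Walk v u} :
    (p.append q).IsCycle ↔ (q.append p).IsCycle := by
  simp only [Walk.isCycle_def, Walk.isTrail_def, ne_eq, Walk.eq_nil_iff_nil, Walk.nil_append_iff,
    Walk.edges_append, Walk.tail_support_append]
  exact and_congr List.perm_append_comm.nodup_iff
    (and_congr (not_congr and_comm) List.perm_append_comm.nodup_iff)

theorem exists_isCycle_map_edges_eq {α : Type*} {f : Sym2 V → α} {v : V} {C : G.Walk v v}
    (hC : C.IsCycle) {l : List α} (hl : C.edges.map f ~r l) :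
    ∃ (w : V) (D : G.Walk w w), D.IsCycle ∧ D.edges.map f = l := by
  obtain ⟨r, hr, rfl⟩ := List.isRotated_iff_mod.1 hl
  rw [List.length_map] at hr
  refine ⟨_, (C.drop r).append (C.take r), ?_, ?_⟩
  · rwa [isCycle_append_comm, C.append_take_drop_eq]
  · rw [Walk.edges_append, Walk.edges_drop, Walk.edges_take,
      ← List.rotate_eq_drop_append_take hr, List.map_rotate]

theorem exists_append_of_map_edges_eq_append {α : Type*} {f : Sym2 V → α} {u v : V}
    {p : G.Walk u v} {a b : List α} (h : p.edges.map f = a ++ b) :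
    ∃ (w : V) (p₁ : G.Walk u w) (p₂ : G.Walk w v),
      p = p₁.append p₂ ∧ p₁.edges.map f = a ∧ p₂.edges.map f = b := by
  refine ⟨_, p.take a.length, p.drop a.length, (p.append_take_drop_eq _).symm, ?_, ?_⟩
  · rw [Walk.edges_take, List.map_take, h, List.take_left]
  · rw [Walk.edges_drop, List.map_drop, h, List.drop_left]

theorem ne_reverse_of_isCycle_append {u v : V} {p : G.Walk u v} {q : G.Walk v u}
    (h : (p.append q).IsCycle) : p ≠ q.reverse := by
  rintro rfl
  have hdisj : q.reverse.edges.Disjoint q.edges :=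
    List.disjoint_of_nodup_append (by simpa only [Walk.edges_append] using h.edges_nodup)
  have hnil : q.edges = [] :=
    List.eq_nil_iff_forall_not_mem.2 fun e he ↦ hdisj (by simpa using he) he
  exact h.not_nil (by simp [← Walk.edges_eq_nil, hnil])

variable {lab : Sym2 V → ℝ}

theorem isIncreasing_iff_sortedLE {x y : V} {p : G.Walk x y} :
    IsIncreasing G lab p ↔ (p.edges.map lab).SortedLE :=
  List.sortedLE_iff_isChain.symm

theorem IsGoodLabeling.not_isCyclicallyUnimodal {v : V} {C : G.Walk v v}
    (hgood : IsGoodLabeling G lab) (hC : C.IsCycle) :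
    ¬ IsCyclicallyUnimodal (C.edges.map lab) := by
  intro h
  have hlen : 2 ≤ (C.edges.map lab).length := by
    simpa using (Nat.le_succ 2).trans hC.three_le_length
  obtain ⟨a, b, ha_ne, hb_ne, hab, ha, hb⟩ := h.exists_ne_nil hlen
  obtain ⟨x, D, hD, hDab⟩ := exists_isCycle_map_edges_eq hC hab
  obtain ⟨y, p, q, rfl, rfl, rfl⟩ := exists_append_of_map_edges_eq_append hDab
  have hp : p.IsPath := hD.isPath_of_append_left (by simpa [← Walk.edges_eq_nil] using hb_ne)
  have hq : q.IsPath := hD.isPath_of_append_right (by simpa [← Walk.edges_eq_nil] using ha_ne)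
  have hq_inc : IsIncreasing G lab q.reverse := by
    rwa [isIncreasing_iff_sortedLE, Walk.edges_reverse, List.map_reverse, List.sortedLE_reverse]
  exact ne_reverse_of_isCycle_append hD
    (hgood x y p q.reverse hp hq.reverse (isIncreasing_iff_sortedLE.2 ha) hq_inc)

theorem exists_isCycle_isCyclicallyUnimodal {x y : V} {p q : G.Walk x y} (hp : p.IsPath)
    (hq : q.IsPath) (hp_inc : IsIncreasing G lab p) (hq_inc : IsIncreasing G lab q)
    (hne : p ≠ q) :
    ∃ (v : V) (C : G.Walk v v), C.IsCycle ∧ IsCyclicallyUnimodal (C.edges.map lab) := by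
  rw [isIncreasing_iff_sortedLE] at hp_inc hq_inc
  obtain ⟨u, v, p', q', hp', hq', hC⟩ := hp.exists_isCycle_of_ne hq hne
  refine ⟨u, _, hC, p'.edges.map lab, (q'.edges.map lab).reverse, ?_, ?_, ?_⟩
  · rw [Walk.edges_append, Walk.edges_reverse, List.map_append, List.map_reverse]
  · exact (hp_inc.pairwise.sublist (hp'.edges_isInfix.sublist.map lab)).sortedLE
  · rw [List.sortedGE_reverse]
    exact (hq_inc.pairwise.sublist (hq'.edges_isInfix.sublist.map lab)).sortedLE

theorem isGoodLabeling_iff_forall_not_isCyclicallyUnimodal :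
    IsGoodLabeling G lab ↔
      ∀ (v : V) (C : G.Walk v v), C.IsCycle → ¬ IsCyclicallyUnimodal (C.edges.map lab) := by
  refine ⟨fun hgood v C hC ↦ hgood.not_isCyclicallyUnimodal hC, fun h x y p q hp hq hp' hq' ↦ ?_⟩
  by_contra hne
  obtain ⟨v, C, hC, huni⟩ := exists_isCycle_isCyclicallyUnimodal hp hq hp' hq' hne
  exact h v C hC huni

end Cycles

theorem good_iff_two_local_extrema_general {V : Type*} (G : SimpleGraph V)
    (lab : Sym2 V → ℝ) :
    IsGoodLabeling G lab ↔
      ∀ (v : V) (C : G.Walk v v), C.IsCycle →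
        TwoLocalMinima (C.edges.map lab) ∨ TwoLocalMaxima (C.edges.map lab) := by
  simp only [isGoodLabeling_iff_forall_not_isCyclicallyUnimodal,
    not_isCyclicallyUnimodal_iff_twoLocalMinima, twoLocalMaxima_iff_twoLocalMinima, or_self]

/-- An edge-labeling `lab` of a graph `G` is good if and only if every cycle of `G` admits at
least two local minima, or at least two local maxima, with respect to `lab`. -/
theorem good_iff_two_local_extrema {V : Type*} [Fintype V] (G : SimpleGraph V)
    (lab : Sym2 V → ℝ) :
    IsGoodLabeling G lab ↔
      ∀ (v : V) (C : G.Walk v v), C.IsCycle →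
        TwoLocalMinima (C.edges.map lab) ∨ TwoLocalMaxima (C.edges.map lab) :=
  good_iff_two_local_extrema_general G lab
end

section
/- Let G be a graph, let v be a cut-vertex of G, let C_1, …, C_p be the vertex sets of the connected components of G \ v, and let G_i = G[C_i ∪ {v}] for i ∈ [p]. Then, for any non-negative integer c, G admits a c-gel if and only if G_i admits a c-gel for every i ∈ [p]. -/
/-- A `c`-gel: a good edge-labeling taking at most `c` distinct values on the edges. -/
def IsCGel {V : Type*} (G : SimpleGraph V) (c : ℕ) (lab : Sym2 V → ℝ) : Prop :=
  IsGoodLabeling G lab ∧ (lab '' G.edgeSet).ncard ≤ c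

/-- `C` is the vertex set of a connected component of `G \ v`: it avoids `v`, is nonempty,
induces a connected subgraph, and has no edge of `G` to the rest of `G \ v`. -/
def IsCompOf {V : Type*} (G : SimpleGraph V) (v : V) (C : Set V) : Prop :=
  v ∉ C ∧ C.Nonempty ∧ (G.induce C).Connected ∧
  ∀ u w : V, u ∈ C → w ∉ C → w ≠ v → ¬ G.Adj u w

/-!
A path with both ends in a piece `C ∪ {v}` never leaves it, since it would have to pass through `v`
both on the way out and on the way back. Two vertices without a common piece are separated by `v`,
so an increasing path between them is the concatenation at `v` of two increasing paths, each inside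
one piece and hence unique. Good labelings of the pieces can therefore be combined freely, each edge
lying in exactly one piece. To keep the number of labels at most `c`, every piece is first relabeled
order-isomorphically with labels from the common palette `{0, …, c - 1}`.
-/

section Gluing

open SimpleGraph Set

variable {V : Type*} {G : SimpleGraph V} {lab lab' : Sym2 V → ℝ} {v x y : V} {s C D : Set V}

/-- `G` has a good labeling whose edge labels all lie in the palette `T`. Unlike a bound on the
number of labels, a fixed palette is preserved when labelings of several subgraphs are combined. -/
def HasGoodLabelingInto (G : SimpleGraph V) (T : Set ℝ) : Prop :=
  ∃ lab : Sym2 V → ℝ, IsGoodLabeling G lab ∧ MapsTo lab G.edgeSet T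

/-- The labeling `lab` of `G` is good on `s`: increasing paths inside `s` are determined by their
ends. This is goodness of the restriction of `lab` to `G[s]`, expressed without subtypes. -/
def IsGoodOn (G : SimpleGraph V) (lab : Sym2 V → ℝ) (s : Set V) : Prop :=
  ∀ (x y : V) (p q : G.Walk x y), p.IsPath → q.IsPath → IsIncreasing G lab p →
    IsIncreasing G lab q → (∀ a ∈ p.support, a ∈ s) → (∀ a ∈ q.support, a ∈ s) → p = q

/-- The edges of `G` with both ends in `s`, that is, the edges of `G[s]` as edges of `G`. -/
def edgesWithin (G : SimpleGraph V) (s : Set V) : Set (Sym2 V) :=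
  {e ∈ G.edgeSet | ∀ a ∈ e, a ∈ s}

theorem IsIncreasing.of_le_imp_le {p : G.Walk x y} (hp : IsIncreasing G lab' p)
    (h : ∀ e ∈ p.edges, ∀ f ∈ p.edges, lab' e ≤ lab' f → lab e ≤ lab f) :
    IsIncreasing G lab p :=
  (List.isChain_map lab).2 <| ((List.isChain_map lab').1 hp).imp_of_mem_imp
    fun e f he hf => h e he f hf

theorem IsIncreasing.of_append {z : V} {p : G.Walk x y} {q : G.Walk y z}
    (h : IsIncreasing G lab (p.append q)) : IsIncreasing G lab p ∧ IsIncreasing G lab q := by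
  rw [IsIncreasing, Walk.edges_append, List.map_append] at h
  exact ⟨h.left_of_append, h.right_of_append⟩

theorem isIncreasing_map_induce_iff {x y : s} (p : (G.induce s).Walk x y) :
    IsIncreasing G lab (p.map (Embedding.induce s).toHom) ↔
      IsIncreasing (G.induce s) (lab ∘ Sym2.map (↑)) p := by
  rw [IsIncreasing, IsIncreasing, Walk.edges_map, List.map_map]
  rfl

theorem IsGoodLabeling.comp_strictMonoOn (h : IsGoodLabeling G lab) {f : ℝ → ℝ}
    (hf : StrictMonoOn f (lab '' G.edgeSet)) : IsGoodLabeling G (f ∘ lab) := by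
  have increasing_of_comp {x y : V} (p : G.Walk x y) (hp : IsIncreasing G (f ∘ lab) p) :
      IsIncreasing G lab p :=
    hp.of_le_imp_le fun _ hd _ he =>
      (hf.le_iff_le (mem_image_of_mem lab (p.edges_subset_edgeSet hd))
        (mem_image_of_mem lab (p.edges_subset_edgeSet he))).1
  exact fun x y p q hp hq hip hiq =>
    h x y p q hp hq (increasing_of_comp p hip) (increasing_of_comp q hiq)

theorem mem_edgesWithin_of_mem_edges {p : G.Walk x y} (hp : ∀ a ∈ p.support, a ∈ s) {e : Sym2 V}
    (he : e ∈ p.edges) : e ∈ edgesWithin G s :=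
  ⟨p.edges_subset_edgeSet he, fun _ ha => hp _ (p.mem_support_of_mem_edges he ha)⟩

theorem IsGoodOn.congr (h : IsGoodOn G lab s) (heq : EqOn lab' lab (edgesWithin G s)) :
    IsGoodOn G lab' s := by
  have increasing_congr {x y : V} (p : G.Walk x y) (hps : ∀ a ∈ p.support, a ∈ s)
      (hp : IsIncreasing G lab' p) : IsIncreasing G lab p :=
    hp.of_le_imp_le fun _ hd _ he hle => by
      rwa [heq (mem_edgesWithin_of_mem_edges hps hd),
        heq (mem_edgesWithin_of_mem_edges hps he)] at hle
  exact fun x y p q hp hq hip hiq hps hqs =>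
    h x y p q hp hq (increasing_congr p hps hip) (increasing_congr q hqs hiq) hps hqs

theorem image_edgeSet_induce :
    Sym2.map (↑) '' (G.induce s).edgeSet = edgesWithin G s := by
  ext e
  constructor
  · rintro ⟨⟨a, b⟩, hab, rfl⟩
    exact ⟨hab, by simp⟩
  · induction e with
    | _ a b =>
      rintro ⟨hab, hs⟩
      exact ⟨s(⟨a, hs a (by simp)⟩, ⟨b, hs b (by simp)⟩), hab, rfl⟩

theorem isGoodLabeling_induce_iff :
    IsGoodLabeling (G.induce s) (lab ∘ Sym2.map (↑)) ↔ IsGoodOn G lab s := by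
  have hinj : Function.Injective (Embedding.induce (G := G) s).toHom := Subtype.val_injective
  constructor
  · intro h x y p q hp hq hip hiq hps hqs
    have heq : p.induce s hps = q.induce s hqs := by
      apply h
      · rwa [← Walk.isPath_map_iff_of_injective hinj, Walk.map_induce]
      · rwa [← Walk.isPath_map_iff_of_injective hinj, Walk.map_induce]
      · rwa [← isIncreasing_map_induce_iff, Walk.map_induce]
      · rwa [← isIncreasing_map_induce_iff, Walk.map_induce]
    rw [← Walk.map_induce p hps, heq, Walk.map_induce]
  · intro h x y p q hp hq hip hiq
    have support_subset (w : (G.induce s).Walk x y) :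
        ∀ a ∈ (w.map (Embedding.induce s).toHom).support, a ∈ s := by
      rw [Walk.support_map]
      intro _ ha
      obtain ⟨a, -, rfl⟩ := List.mem_map.1 ha
      exact a.2
    exact Walk.map_injective_of_injective hinj _ _ <|
      h _ _ _ _ (hp.map hinj) (hq.map hinj) ((isIncreasing_map_induce_iff p).2 hip)
        ((isIncreasing_map_induce_iff q).2 hiq) (support_subset p) (support_subset q)

theorem hasGoodLabelingInto_induce_iff {T : Set ℝ} :
    HasGoodLabelingInto (G.induce s) T ↔
      ∃ lab : Sym2 V → ℝ, IsGoodOn G lab s ∧ MapsTo lab (edgesWithin G s) T := by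
  simp only [← isGoodLabeling_induce_iff, ← image_edgeSet_induce, mapsTo_image_iff]
  constructor
  · rintro ⟨lab, hlab⟩
    refine ⟨Function.extend (Sym2.map (↑)) lab 0, ?_⟩
    rwa [Function.extend_comp (Sym2.map.injective Subtype.val_injective)]
  · rintro ⟨lab, hlab⟩
    exact ⟨_, hlab⟩

theorem exists_strictMonoOn_mapsTo_Iio {α : Type*} [LinearOrder α] {S : Set α} {c : ℕ}
    (hS : S.encard ≤ c) : ∃ rank : α → ℕ, StrictMonoOn rank S ∧ MapsTo rank S (Iio c) := by
  obtain ⟨hfin, hcard⟩ := encard_le_coe_iff_finite_ncard_le.1 hS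
  refine ⟨fun a => (S ∩ Iio a).ncard, fun a ha b _ hab => ?_, fun a ha => ?_⟩
  · refine ncard_lt_ncard ?_ (hfin.inter_of_left _)
    exact (ssubset_iff_of_subset (inter_subset_inter_right _ (Iio_subset_Iio hab.le))).2
      ⟨a, ⟨ha, hab⟩, fun h => lt_irrefl a h.2⟩
  · refine (ncard_lt_ncard ?_ hfin).trans_le hcard
    exact (ssubset_iff_of_subset inter_subset_left).2 ⟨a, ha, fun h => lt_irrefl a h.2⟩

theorem hasGoodLabelingInto_natCast_image_Iio_iff {c : ℕ} :
    HasGoodLabelingInto G (Nat.cast '' Iio c) ↔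
      ∃ lab : Sym2 V → ℝ, IsGoodLabeling G lab ∧ (lab '' G.edgeSet).encard ≤ c := by
  constructor
  · rintro ⟨lab, hgood, hmaps⟩
    refine ⟨lab, hgood, ?_⟩
    calc (lab '' G.edgeSet).encard
        ≤ ((Nat.cast : ℕ → ℝ) '' Iio c).encard := encard_le_encard hmaps.image_subset
      _ ≤ (Iio c).encard := encard_image_le _ _
      _ = c := by rw [encard_eq_coe_toFinset_card, toFinset_Iio, Nat.card_Iio]
  · rintro ⟨lab, hgood, hcard⟩
    obtain ⟨rank, hmono, hmaps⟩ := exists_strictMonoOn_mapsTo_Iio hcard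
    exact ⟨(fun r => (rank r : ℝ)) ∘ lab,
      hgood.comp_strictMonoOn fun a ha b hb hab => Nat.cast_lt.2 (hmono ha hb hab),
      fun e he => mem_image_of_mem _ (hmaps (mem_image_of_mem lab he))⟩

theorem isCGel_iff_encard_le [Finite V] {c : ℕ} :
    IsCGel G c lab ↔ IsGoodLabeling G lab ∧ (lab '' G.edgeSet).encard ≤ c := by
  rw [IsCGel, encard_le_coe_iff_finite_ncard_le, and_iff_right (toFinite _)]

theorem exists_isCompOf_mem (G : SimpleGraph V) (hx : x ≠ v) : ∃ C, IsCompOf G v C ∧ x ∈ C := by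
  let K := (G.induce {v}ᶜ).connectedComponentMk ⟨x, hx⟩
  let toImage : K.toSimpleGraph →g G.induce (Subtype.val '' K.supp) :=
    { toFun := fun z : K.supp => ⟨z.1, mem_image_of_mem _ z.2⟩
      map_rel' := id }
  refine ⟨Subtype.val '' K.supp, ⟨?_, ⟨x, ⟨x, hx⟩, rfl, rfl⟩, ?_, ?_⟩, ⟨x, hx⟩, rfl, rfl⟩
  · rintro ⟨z, -, hz⟩
    exact z.2 hz
  · refine K.connected_toSimpleGraph.map toImage ?_
    rintro ⟨_, z, hz, rfl⟩
    exact ⟨⟨z, hz⟩, rfl⟩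
  · rintro _ w ⟨z, hz, rfl⟩ hw hwv hadj
    exact hw ⟨⟨w, hwv⟩, K.mem_supp_of_adj_mem_supp hz hadj, rfl⟩

theorem exists_isCompOf_of_adj_or_eq (G : SimpleGraph V) (hne : x ≠ y)
    (h : G.Adj x y ∨ x = v ∨ y = v) :
    ∃ C, IsCompOf G v C ∧ x ∈ C ∪ {v} ∧ y ∈ C ∪ {v} := by
  wlog hx : x ≠ v generalizing x y
  · have hy : y ≠ v := fun hy => hne ((not_not.1 hx).trans hy.symm)
    obtain ⟨C, hC, hyC, hxC⟩ := this hne.symm (h.imp Adj.symm Or.symm) hy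
    exact ⟨C, hC, hxC, hyC⟩
  obtain ⟨C, hC, hxC⟩ := exists_isCompOf_mem G hx
  refine ⟨C, hC, Or.inl hxC, ?_⟩
  by_contra hy
  obtain ⟨hyC, hyv⟩ := not_or.1 hy
  exact hC.2.2.2 x y hxC hyC hyv (h.resolve_right (by tauto))

namespace IsCompOf

theorem mem_support_of_notMem (hC : IsCompOf G v C) (p : G.Walk x y) (hx : x ∈ C ∪ {v})
    (hy : y ∉ C) : v ∈ p.support := by
  rcases hx with hx | rfl
  · obtain ⟨d, hd, hfst, hsnd⟩ := p.exists_boundary_dart C hx hy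
    have hv : d.snd = v := of_not_not fun hv => hC.2.2.2 _ _ hfst hsnd hv d.adj
    exact hv ▸ p.dart_snd_mem_support_of_mem_darts hd
  · exact p.start_mem_support

theorem subset_of_mem (hC : IsCompOf G v C) (hD : IsCompOf G v D) (hxC : x ∈ C) (hxD : x ∈ D) :
    C ⊆ D := by
  intro y hyC
  by_contra hyD
  obtain ⟨p⟩ := hC.2.2.1.preconnected ⟨x, hxC⟩ ⟨y, hyC⟩
  have hv := hD.mem_support_of_notMem (p.map (Embedding.induce C).toHom) (Or.inl hxD) hyD
  rw [Walk.support_map] at hv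
  obtain ⟨z, -, hz⟩ := List.mem_map.1 hv
  exact hC.1 (hz ▸ z.2)

theorem eq_of_mem_edgesWithin (hC : IsCompOf G v C) (hD : IsCompOf G v D) {e : Sym2 V}
    (heC : e ∈ edgesWithin G (C ∪ {v})) (heD : e ∈ edgesWithin G (D ∪ {v})) : C = D := by
  obtain ⟨x, hxe, hxv⟩ : ∃ x ∈ e, x ≠ v := by
    by_contra! h
    induction e with
    | _ a b => exact heC.1.ne ((h a (by simp)).trans (h b (by simp)).symm)
  have hxC : x ∈ C := (heC.2 x hxe).resolve_right hxv
  have hxD : x ∈ D := (heD.2 x hxe).resolve_right hxv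
  exact (hC.subset_of_mem hD hxC hxD).antisymm (hD.subset_of_mem hC hxD hxC)

theorem support_subset_of_isPath (hC : IsCompOf G v C) {p : G.Walk x y} (hp : p.IsPath)
    (hx : x ∈ C ∪ {v}) (hy : y ∈ C ∪ {v}) : ∀ a ∈ p.support, a ∈ C ∪ {v} := by
  classical
  intro a ha
  by_contra haC
  obtain ⟨haC, hav⟩ := not_or.1 haC
  have hv_take : v ∈ (p.takeUntil a ha).support := hC.mem_support_of_notMem _ hx haC
  have hv_drop : v ∈ (p.dropUntil a ha).support := by
    simpa using hC.mem_support_of_notMem (p.dropUntil a ha).reverse hy haC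
  rw [← p.take_spec ha] at hp
  exact hp.ne_of_mem_support_of_append (Ne.symm hav) hv_take hv_drop rfl

theorem eq_of_isIncreasing (hC : IsCompOf G v C) (hgood : IsGoodOn G lab (C ∪ {v}))
    (hx : x ∈ C ∪ {v}) (hy : y ∈ C ∪ {v}) {p q : G.Walk x y} (hp : p.IsPath) (hq : q.IsPath)
    (hip : IsIncreasing G lab p) (hiq : IsIncreasing G lab q) : p = q :=
  hgood x y p q hp hq hip hiq (hC.support_subset_of_isPath hp hx hy)
    (hC.support_subset_of_isPath hq hx hy)

end IsCompOf

theorem exists_labeling_eqOn_edgesWithin {α : Type*} (G : SimpleGraph V) (v : V)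
    (L : Set V → Sym2 V → α) :
    ∃ lab : Sym2 V → α, ∀ C, IsCompOf G v C → EqOn lab (L C) (edgesWithin G (C ∪ {v})) := by
  let IsPieceOf (e : Sym2 V) (C : Set V) : Prop :=
    IsCompOf G v C ∧ e ∈ edgesWithin G (C ∪ {v})
  refine ⟨fun e => L (Classical.epsilon (IsPieceOf e)) e, fun C hC e he => ?_⟩
  obtain ⟨hD, heD⟩ : IsPieceOf e (Classical.epsilon (IsPieceOf e)) :=
    Classical.epsilon_spec ⟨C, hC, he⟩
  exact congrArg (L · e) (hD.eq_of_mem_edgesWithin hC heD he)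

theorem eq_of_isIncreasing_of_eq_or_eq (hgood : ∀ C, IsCompOf G v C → IsGoodOn G lab (C ∪ {v}))
    (hv : x = v ∨ y = v) {p q : G.Walk x y} (hp : p.IsPath) (hq : q.IsPath)
    (hip : IsIncreasing G lab p) (hiq : IsIncreasing G lab q) : p = q := by
  rcases eq_or_ne x y with rfl | hne
  · rw [(Walk.isPath_iff_nil.1 hp).eq_nil, (Walk.isPath_iff_nil.1 hq).eq_nil]
  · obtain ⟨C, hC, hx, hy⟩ := exists_isCompOf_of_adj_or_eq G hne (Or.inr hv)
    exact hC.eq_of_isIncreasing (hgood C hC) hx hy hp hq hip hiq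

theorem isGoodLabeling_of_forall_isGoodOn
    (hgood : ∀ C, IsCompOf G v C → IsGoodOn G lab (C ∪ {v})) : IsGoodLabeling G lab := by
  classical
  intro x y p q hp hq hip hiq
  by_cases hv : v ∈ p.support ∧ v ∈ q.support
  · obtain ⟨hvp, hvq⟩ := hv
    rw [← p.take_spec hvp] at hip
    rw [← q.take_spec hvq] at hiq
    obtain ⟨hip_take, hip_drop⟩ := hip.of_append
    obtain ⟨hiq_take, hiq_drop⟩ := hiq.of_append
    have take_eq : p.takeUntil v hvp = q.takeUntil v hvq :=
      eq_of_isIncreasing_of_eq_or_eq hgood (Or.inr rfl) (hp.takeUntil hvp) (hq.takeUntil hvq)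
        hip_take hiq_take
    have drop_eq : p.dropUntil v hvp = q.dropUntil v hvq :=
      eq_of_isIncreasing_of_eq_or_eq hgood (Or.inl rfl) (hp.dropUntil hvp) (hq.dropUntil hvq)
        hip_drop hiq_drop
    rw [← p.take_spec hvp, take_eq, drop_eq, q.take_spec]
  · obtain ⟨w, hw⟩ : ∃ w : G.Walk x y, v ∉ w.support := by
      rcases not_and_or.1 hv with hvp | hvq
      exacts [⟨p, hvp⟩, ⟨q, hvq⟩]
    have hxv : x ≠ v := fun h => hw (h ▸ w.start_mem_support)
    obtain ⟨C, hC, hxC⟩ := exists_isCompOf_mem G hxv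
    have hyC : y ∈ C := of_not_not fun hyC => hw (hC.mem_support_of_notMem w (Or.inl hxC) hyC)
    exact hC.eq_of_isIncreasing (hgood C hC) (Or.inl hxC) (Or.inl hyC) hp hq hip hiq

theorem mapsTo_edgeSet_of_forall_mapsTo_edgesWithin {α : Type*} {lab : Sym2 V → α} {T : Set α}
    (h : ∀ C, IsCompOf G v C → MapsTo lab (edgesWithin G (C ∪ {v})) T) :
    MapsTo lab G.edgeSet T := by
  rintro ⟨a, b⟩ hab
  obtain ⟨C, hC, ha, hb⟩ := exists_isCompOf_of_adj_or_eq (v := v) G hab.ne (Or.inl hab)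
  exact h C hC ⟨hab, Sym2.ball.2 ⟨ha, hb⟩⟩

theorem hasGoodLabelingInto_iff_forall_isCompOf (G : SimpleGraph V) (v : V) (T : Set ℝ) :
    HasGoodLabelingInto G T ↔
      ∀ C, IsCompOf G v C → HasGoodLabelingInto (G.induce (C ∪ {v})) T := by
  simp only [hasGoodLabelingInto_induce_iff]
  constructor
  · rintro ⟨lab, hgood, hmaps⟩ C -
    exact ⟨lab, fun x y p q hp hq hip hiq _ _ => hgood x y p q hp hq hip hiq,
      hmaps.mono_left fun e he => he.1⟩
  · intro h
    choose! L hgood hmaps using h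
    obtain ⟨lab, hlab⟩ := exists_labeling_eqOn_edgesWithin G v L
    exact ⟨lab, isGoodLabeling_of_forall_isGoodOn fun C hC => (hgood C hC).congr (hlab C hC),
      mapsTo_edgeSet_of_forall_mapsTo_edgesWithin fun C hC =>
        (hmaps C hC).congr (hlab C hC).symm⟩

/-- Labels are counted with `encard`, since `ncard` is zero on infinite sets. -/
theorem cgel_iff_components_at_cut_vertex_general (G : SimpleGraph V) (v : V) (c : ℕ) :
    (∃ lab : Sym2 V → ℝ, IsGoodLabeling G lab ∧ (lab '' G.edgeSet).encard ≤ c) ↔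
      ∀ C : Set V, IsCompOf G v C →
        ∃ lab : Sym2 ↥(C ∪ {v} : Set V) → ℝ, IsGoodLabeling (G.induce (C ∪ {v})) lab ∧
          (lab '' (G.induce (C ∪ {v})).edgeSet).encard ≤ c := by
  simp only [← hasGoodLabelingInto_natCast_image_Iio_iff]
  exact hasGoodLabelingInto_iff_forall_isCompOf G v _

end Gluing

/-- Let `v` be a cut-vertex of `G` (i.e. `G` is connected and `G \ v` is disconnected).
Then, for any non-negative integer `c`, `G` admits a `c`-gel if and only if, for every
vertex set `C` of a connected component of `G \ v`, the induced subgraph `G[C ∪ {v}]`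
admits a `c`-gel. -/
theorem cgel_iff_components_at_cut_vertex {V : Type*} [Fintype V] (G : SimpleGraph V)
    (v : V) (hconn : G.Connected)
    (hcut : ¬ (G.induce ({v}ᶜ : Set V)).Connected) (c : ℕ) :
    (∃ lab : Sym2 V → ℝ, IsCGel G c lab) ↔
      ∀ C : Set V, IsCompOf G v C →
        ∃ lab : Sym2 ↥(C ∪ {v} : Set V) → ℝ, IsCGel (G.induce (C ∪ {v})) c lab := by
  simpa only [isCGel_iff_encard_le] using cgel_iff_components_at_cut_vertex_general G v c
end
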